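/- Consider the one-defect three-state quantum walk: C_x = C for x ≠ 0 and C_0 at x = 0, where C = (a^{(i,j)}) and C_0 = (a_0^{(i,j)}) are 3×3 unitary matrices with |a^{(1,3)}|, |a^{(2,2)}|, |a^{(3,1)}|, |a_0^{(1,3)}|, |a_0^{(2,2)}|, |a_0^{(3,1)}| ≠ 1, and let λ ∈ [0,2π) with e^{iλ} ≠ a^{(2,2)} and e^{iλ} ≠ a_0^{(2,2)}. Then e^{iλ} is an eigenvalue of U if and only if there exists a nonzero Ψ̃ : ℤ → ℂ² satisfying Conditions 1 and 2. Condition 1: if A_0(λ) ≠ 0 then Ψ̃(1) = T_0(λ)Ψ̃(0); if A_0(λ) = 0 then Ψ̃(0) = k₁·(a_0^{(3,3)} conj(a_0^{(3,2)}), conj(a_0^{(1,1)}) a_0^{(2,1)})ᵗ and Ψ̃(1) = k₂·(conj(a_0^{(1,1)}) a_0^{(1,2)}, a_0^{(3,3)} conj(a_0^{(2,3)}))ᵗ for some k₁, k₂ ∈ ℂ. Condition 2: if A(λ) ≠ 0 then |tr T(λ)| > 2, Ψ̃(x+1) = T(λ)Ψ̃(x) for all x ≥ 1 and all x < 0, T(λ)Ψ̃(1)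 = ζ Ψ̃(1) for the eigenvalue ζ of T(λ) with |ζ| < 1, and T(λ)Ψ̃(0) = ζ' Ψ̃(0) for the eigenvalue ζ' of T(λ) with |ζ'| > 1; if A(λ) = 0 then Ψ̃(0) = k₁·(conj(a^{(1,1)}) a^{(1,2)}, a^{(3,3)} conj(a^{(2,3)}))ᵗ and Ψ̃(1) = k₂·(a^{(3,3)} conj(a^{(3,2)}), conj(a^{(1,1)}) a^{(2,1)})ᵗ for some k₁, k₂ ∈ ℂ, and for each x ≠ 0, 1: Ψ̃(x) = k_x·(a^{(3,3)} conj(a^{(3,2)}), conj(a^{(1,1)}) a^{(2,1)})ᵗ for some k_x ∈ ℂ if (a^{(3,3)}/conj(a^{(1,1)}))² = a^{(1,2)} a^{(2,1)}/(conj(a^{(3,2)}) conj(a^{(2,3)})), and Ψ̃(x) = 0 otherwise, with k_x ≠ 0 for only finitely many x. -/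

import Mathlib

open Complex Matrix ComplexConjugate

noncomputable section

/-- `μ` is an eigenvalue of the time-evolution operator `U = SC` of the three-state
quantum walk on `ℤ` with coin matrices `a x`. -/
def IsQWEigenvalue (a : ℤ → Matrix (Fin 3) (Fin 3) ℂ) (μ : ℂ) : Prop :=
  ∃ Ψ : ℤ → Fin 3 → ℂ, Ψ ≠ 0 ∧
    Summable (fun x : ℤ => ∑ i, ‖Ψ x i‖ ^ 2) ∧
    ∀ x : ℤ,
      μ * Ψ x 0 = ∑ j, a (x + 1) 0 j * Ψ (x + 1) j ∧
      μ * Ψ x 1 = ∑ j, a x 1 j * Ψ x j ∧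
      μ * Ψ x 2 = ∑ j, a (x - 1) 2 j * Ψ (x - 1) j

/-- `A(λ)` for a 3×3 coin matrix `M`. -/
def coefA (M : Matrix (Fin 3) (Fin 3) ℂ) (lam : ℝ) : ℂ :=
  M 0 0 + M 0 1 * M 1 0 / (Complex.exp (lam * Complex.I) - M 1 1)

/-- The transfer matrix `T(λ)` of a 3×3 coin matrix `M`. -/
def transfer (M : Matrix (Fin 3) (Fin 3) ℂ) (lam : ℝ) : Matrix (Fin 2) (Fin 2) ℂ :=
  (M 0 0 * Complex.exp (lam * Complex.I) - M.det * conj (M 2 2))⁻¹ •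
    !![Complex.exp (lam * Complex.I) * (Complex.exp (lam * Complex.I) - M 1 1),
        -(M 0 2 * Complex.exp (lam * Complex.I)) - M.det * conj (M 2 0);
        M 2 0 * Complex.exp (lam * Complex.I) + M.det * conj (M 0 2),
        -(M.det * (Complex.exp (-(lam * Complex.I)) - conj (M 1 1)))]

/-- The vector `(a^{(3,3)} conj a^{(3,2)}, conj a^{(1,1)} a^{(2,1)})ᵗ`. -/
def vecA (M : Matrix (Fin 3) (Fin 3) ℂ) : Fin 2 → ℂ :=
  ![M 2 2 * conj (M 2 1), conj (M 0 0) * M 1 0]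

/-- The vector `(conj a^{(1,1)} a^{(1,2)}, a^{(3,3)} conj a^{(2,3)})ᵗ`. -/
def vecB (M : Matrix (Fin 3) (Fin 3) ℂ) : Fin 2 → ℂ :=
  ![conj (M 0 0) * M 0 1, M 2 2 * conj (M 1 2)]

/-- The condition `(a^{(3,3)}/conj a^{(1,1)})² = a^{(1,2)}a^{(2,1)}/(conj a^{(3,2)} conj a^{(2,3)})`. -/
def algCond (M : Matrix (Fin 3) (Fin 3) ℂ) : Prop :=
  (M 2 2 / conj (M 0 0)) ^ 2 = M 0 1 * M 1 0 / (conj (M 2 1) * conj (M 1 2))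

/-!
Eliminating the middle component turns each coin into a unitary two-state coin `N` (a Schur
complement), and the eigenvalue equation into a relation between the amplitudes on either side of
each site.

If `N 0 0 = A(λ) ≠ 0`, this relation is `q = T p`, and unitarity of `N` gives `|det T| = 1` and
`det T * conj (tr T) = tr T`. By the second identity, eigenvalues of `T` off the unit circle are
parallel, which forces `|tr T| > 2`. Square-summability on a half-line then means starting on the
contracting eigenvector to the right, and on the expanding one to the left.

If `A(λ) = 0`, then `N` is antidiagonal and the relation only requires `p` and `q` to lie on two
fixed lines. The sites decouple, so a solution can be truncated to finite support.
-/

section Unitary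

variable {n : Type*} [Fintype n] [DecidableEq n]

lemma mem_unitaryGroup_iff_forall_dotProduct {R : Type*} [CommRing R] [StarRing R]
    {U : Matrix n n R} :
    U ∈ unitaryGroup n R ↔ ∀ v w : n → R, star (U *ᵥ v) ⬝ᵥ (U *ᵥ w) = star v ⬝ᵥ w := by
  have gram (v w : n → R) : star (U *ᵥ v) ⬝ᵥ (U *ᵥ w) = star v ⬝ᵥ ((star U * U) *ᵥ w) := by
    rw [star_mulVec, ← dotProduct_mulVec, mulVec_mulVec, star_eq_conjTranspose]
  rw [mem_unitaryGroup_iff']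
  refine ⟨fun h v w => by rw [gram, h, one_mulVec], fun h => ?_⟩
  ext i j
  simpa [← Pi.single_star, one_apply, Pi.single_apply, eq_comm] using
    (gram (Pi.single i 1) (Pi.single j 1)).symm.trans (h _ _)

lemma adjugate_of_mem_unitaryGroup {R : Type*} [CommRing R] [StarRing R] {U : Matrix n n R}
    (hU : U ∈ unitaryGroup n R) : U.adjugate = U.det • Uᴴ := by
  calc U.adjugate = U.adjugate * (U * Uᴴ) := by
        rw [← star_eq_conjTranspose, mem_unitaryGroup_iff.1 hU, mul_one]
    _ = U.det • Uᴴ := by rw [← mul_assoc, adjugate_mul, smul_mul_assoc, one_mul]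

lemma norm_apply_eq_one_of_row {𝕜 : Type*} [RCLike 𝕜] {U : Matrix n n 𝕜}
    (hU : U ∈ unitaryGroup n 𝕜) {i j : n} (h : ∀ k, k ≠ j → U i k = 0) : ‖U i j‖ = 1 := by
  have hii : U i j * star (U i j) = 1 := by
    rw [← one_apply_eq (α := 𝕜) i, ← mem_unitaryGroup_iff.1 hU, mul_apply,
      Finset.sum_eq_single j (fun k _ hk => by rw [h k hk, zero_mul]) (by simp), star_apply]
  exact CStarRing.norm_of_mem_unitary (Unitary.mem_iff_self_mul_star.2 hii)

lemma norm_apply_eq_one_of_col {𝕜 : Type*} [RCLike 𝕜] {U : Matrix n n 𝕜}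
    (hU : U ∈ unitaryGroup n 𝕜) {i j : n} (h : ∀ k, k ≠ i → U k j = 0) : ‖U i j‖ = 1 :=
  norm_apply_eq_one_of_row (transpose_mem_unitaryGroup_iff.2 hU) h

lemma norm_det_of_mem_unitaryGroup {𝕜 : Type*} [RCLike 𝕜] {U : Matrix n n 𝕜}
    (hU : U ∈ unitaryGroup n 𝕜) : ‖U.det‖ = 1 :=
  CStarRing.norm_of_mem_unitary (det_of_mem_unitary hU)

end Unitary

section Elimination

variable {K : Type*} [Field K] {n : ℕ} {M : Matrix (Fin (n + 1)) (Fin (n + 1)) K}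
  {k : Fin (n + 1)} {μ : K}

/-- The Schur complement of a square matrix at the spectral parameter `μ`: the matrix acting on the
remaining components once component `k` is eliminated through `(M u) k = μ * u k`. -/
def eliminate (M : Matrix (Fin (n + 1)) (Fin (n + 1)) K) (k : Fin (n + 1)) (μ : K) :
    Matrix (Fin n) (Fin n) K :=
  of fun i j => M (k.succAbove i) (k.succAbove j) +
    M (k.succAbove i) k * M k (k.succAbove j) / (μ - M k k)

lemma mulVec_apply_eq_mul_iff (hμ : μ ≠ M k k) (u : Fin (n + 1) → K) :
    (M *ᵥ u) k = μ * u k ↔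
      u k = (∑ j, M k (k.succAbove j) * u (k.succAbove j)) / (μ - M k k) := by
  rw [mulVec, dotProduct, Fin.sum_univ_succAbove _ k, eq_div_iff (sub_ne_zero.2 hμ)]
  constructor <;> intro h <;> linear_combination -h

lemma removeNth_mulVec (hμ : μ ≠ M k k) {u : Fin (n + 1) → K} (hu : (M *ᵥ u) k = μ * u k) :
    k.removeNth (M *ᵥ u) = eliminate M k μ *ᵥ k.removeNth u := by
  ext i
  have hk := (mulVec_apply_eq_mul_iff hμ u).1 hu
  simp only [Fin.removeNth, mulVec, dotProduct, eliminate, of_apply, Fin.sum_univ_succAbove _ k,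
    add_mul, Finset.sum_add_distrib]
  rw [hk, Finset.sum_div, Finset.mul_sum, add_comm]
  congr 1
  exact Finset.sum_congr rfl fun j _ => by ring

/-- Lifting a reduced vector back to a solution of the eliminated equation turns isometry of `M`
into isometry of the reduced matrix: both sides lose the same contribution `|u k|²`. -/
lemma eliminate_mem_unitaryGroup [StarRing K] (hM : M ∈ unitaryGroup (Fin (n + 1)) K)
    (hunit : star μ * μ = 1) (hμ : μ ≠ M k k) : eliminate M k μ ∈ unitaryGroup (Fin n) K := by
  rw [mem_unitaryGroup_iff_forall_dotProduct] at hM ⊢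
  have lift (v : Fin n → K) :
      ∃ u : Fin (n + 1) → K, k.removeNth u = v ∧ (M *ᵥ u) k = μ * u k :=
    ⟨Fin.insertNth (α := fun _ => K) k ((∑ j, M k (k.succAbove j) * v j) / (μ - M k k)) v,
      Fin.removeNth_insertNth .., (mulVec_apply_eq_mul_iff hμ _).2 (by simp)⟩
  have split (x y : Fin (n + 1) → K) :
      star x ⬝ᵥ y = star (x k) * y k + star (k.removeNth x) ⬝ᵥ k.removeNth y :=
    Fin.sum_univ_succAbove _ k
  intro v w
  obtain ⟨v, rfl, hv⟩ := lift v
  obtain ⟨w, rfl, hw⟩ := lift w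
  have hvw := hM v w
  rw [split, split v, hv, hw, removeNth_mulVec hμ hv, removeNth_mulVec hμ hw, star_mul] at hvw
  linear_combination hvw - star (v k) * w k * hunit

end Elimination

section Coin

variable {M : Matrix (Fin 3) (Fin 3) ℂ} {μ : ℂ}

lemma sub_smul_eliminate_one (hM : M ∈ unitaryGroup (Fin 3) ℂ) (hne : μ ≠ M 1 1) :
    (μ - M 1 1) • eliminate M 1 μ =
      !![M 0 0 * μ - M.det * conj (M 2 2), M 0 2 * μ + M.det * conj (M 2 0);
         M 2 0 * μ + M.det * conj (M 0 2), M 2 2 * μ - M.det * conj (M 0 0)] := by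
  have cofactor (i j : Fin 3) : M.det * conj (M j i) = M.adjugate i j := by
    simp [adjugate_of_mem_unitaryGroup hM]
  have h := sub_ne_zero.2 hne
  have h2 : (1 : Fin 3).succAbove 1 = 2 := rfl
  ext i j
  fin_cases i <;> fin_cases j <;> simp [eliminate, cofactor, adjugate_fin_three, h2] <;>
    field_simp <;> ring

lemma sub_mul_det_eliminate_one (hM : M ∈ unitaryGroup (Fin 3) ℂ) (hne : μ ≠ M 1 1) :
    (μ - M 1 1) * (eliminate M 1 μ).det = M.det * (conj (M 1 1) * μ - 1) := by
  have cofactor : M.det * conj (M 1 1) = M.adjugate 1 1 := by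
    simp [adjugate_of_mem_unitaryGroup hM]
  have h := sub_ne_zero.2 hne
  have h2 : (1 : Fin 3).succAbove 1 = 2 := rfl
  rw [mul_sub, ← mul_assoc, cofactor, det_fin_two, det_fin_three]
  simp only [eliminate, of_apply, ne_eq, one_ne_zero, not_false_eq_true,
    Fin.succAbove_ne_zero_zero, h2, adjugate_fin_three, cons_val', cons_val_one, cons_val_zero,
    cons_val_fin_one, mul_one]
  field_simp
  ring

end Coin

section Scattering

variable {K : Type*} [Field K] {N : Matrix (Fin 2) (Fin 2) K} {μ : K} {p q : Fin 2 → K}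

/-- The two-state scattering relation at a site `x` with coin `N`, for the amplitudes
`p = (Ψ₁(x-1), Ψ₃(x))` and `q = (Ψ₁(x), Ψ₃(x+1))` on either side of the site: `N` sends the
amplitudes `(Ψ₁(x), Ψ₃(x))` at the site to `μ` times the shifted ones. -/
def Scatters (N : Matrix (Fin 2) (Fin 2) K) (μ : K) (p q : Fin 2 → K) : Prop :=
  N *ᵥ ![q 0, p 1] = μ • ![p 0, q 1]

/-- The transfer matrix of the two-state coin `N`, which turns `Scatters N μ p q` into an explicit
recursion for `q`. If `N 0 0 = 0` there is none, and this is the zero matrix. -/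
def scatteringTransfer (N : Matrix (Fin 2) (Fin 2) K) (μ : K) : Matrix (Fin 2) (Fin 2) K :=
  (N 0 0)⁻¹ • !![μ, -N 0 1; N 1 0, N.det * μ⁻¹]

lemma scatters_iff : Scatters N μ p q ↔
    N 0 0 * q 0 + N 0 1 * p 1 = μ * p 0 ∧ N 1 0 * q 0 + N 1 1 * p 1 = μ * q 1 := by
  simp [Scatters, funext_iff, Fin.forall_fin_two]

lemma scatters_iff_scatteringTransfer_mulVec (hμ : μ ≠ 0) (hN : N 0 0 ≠ 0) :
    Scatters N μ p q ↔ scatteringTransfer N μ *ᵥ p = q := by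
  have hT : scatteringTransfer N μ *ᵥ p = q ↔
      (N 0 0)⁻¹ * (μ * p 0 - N 0 1 * p 1) = q 0 ∧
        (N 0 0)⁻¹ * (N 1 0 * p 0 + N.det * μ⁻¹ * p 1) = q 1 := by
    rw [scatteringTransfer, smul_mulVec]
    simp [funext_iff, Fin.forall_fin_two, vecHead, vecTail, sub_eq_add_neg]
  rw [hT, scatters_iff, det_fin_two]
  field_simp
  constructor <;> rintro ⟨h0, h1⟩
  · exact ⟨by linear_combination -h0, by linear_combination N 0 0 * h1 - N 1 0 * h0⟩
  · refine ⟨by linear_combination -h0, mul_left_cancel₀ hN ?_⟩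
    linear_combination h1 - N 1 0 * h0

lemma det_scatteringTransfer (hμ : μ ≠ 0) (hN : N 0 0 ≠ 0) :
    (scatteringTransfer N μ).det = N 1 1 / N 0 0 := by
  rw [scatteringTransfer, det_smul, det_fin_two_of, det_fin_two, Fintype.card_fin]
  field_simp
  ring

lemma trace_scatteringTransfer :
    (scatteringTransfer N μ).trace = (N 0 0)⁻¹ * (μ + N.det * μ⁻¹) := by
  rw [scatteringTransfer, trace_smul, trace_fin_two_of, smul_eq_mul]

lemma mulVec_eq_smul_iff_scatters {M : Matrix (Fin 3) (Fin 3) K} (hne : μ ≠ M 1 1) (m : K) :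
    M *ᵥ ![q 0, m, p 1] = μ • ![p 0, m, q 1] ↔
      m = (M 1 0 * q 0 + M 1 2 * p 1) / (μ - M 1 1) ∧ Scatters (eliminate M 1 μ) μ p q := by
  have hmid : (M *ᵥ ![q 0, m, p 1]) 1 = μ * m ↔
      m = (M 1 0 * q 0 + M 1 2 * p 1) / (μ - M 1 1) := by
    simpa using mulVec_apply_eq_mul_iff hne ![q 0, m, p 1]
  have removeNth_one (f : Fin 3 → K) : Fin.removeNth 1 f = ![f 0, f 2] := List.ofFn_inj.1 rfl
  have hsplit (v w : Fin 3 → K) :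
      v = w ↔ v 1 = w 1 ∧ Fin.removeNth 1 v = Fin.removeNth 1 w := by
    rw [← Fin.eq_insertNth_iff, Fin.insertNth_self_removeNth]
  rw [hsplit, ← hmid]
  refine and_congr_right fun h => ?_
  rw [removeNth_mulVec hne h, removeNth_one, removeNth_one, Scatters]
  simp

lemma apply_one_one_of_mem_unitaryGroup {R : Type*} [CommRing R] [StarRing R]
    {U : Matrix (Fin 2) (Fin 2) R} (hU : U ∈ unitaryGroup (Fin 2) R) :
    U 1 1 = U.det * star (U 0 0) := by
  simpa [adjugate_fin_two] using congrFun (congrFun (adjugate_of_mem_unitaryGroup hU) 0) 0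

lemma norm_det_scatteringTransfer {N : Matrix (Fin 2) (Fin 2) ℂ} {μ : ℂ}
    (hN : N ∈ unitaryGroup (Fin 2) ℂ) (hμ : μ ≠ 0) (h0 : N 0 0 ≠ 0) :
    ‖(scatteringTransfer N μ).det‖ = 1 := by
  rw [det_scatteringTransfer hμ h0, apply_one_one_of_mem_unitaryGroup hN, norm_div, norm_mul,
    norm_star, norm_det_of_mem_unitaryGroup hN, one_mul, div_self (norm_ne_zero_iff.2 h0)]

lemma det_mul_conj_trace_scatteringTransfer {N : Matrix (Fin 2) (Fin 2) ℂ} {μ : ℂ}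
    (hN : N ∈ unitaryGroup (Fin 2) ℂ) (hμ : ‖μ‖ = 1) (h0 : N 0 0 ≠ 0) :
    (scatteringTransfer N μ).det * conj (scatteringTransfer N μ).trace =
      (scatteringTransfer N μ).trace := by
  have hμ0 : μ ≠ 0 := by rintro rfl; simp at hμ
  have hδ := norm_det_of_mem_unitaryGroup hN
  have hδ0 : N.det ≠ 0 := by rw [← norm_ne_zero_iff, hδ]; exact one_ne_zero
  have hc0 : conj (N 0 0) ≠ 0 := (map_ne_zero _).2 h0
  rw [det_scatteringTransfer hμ0 h0, trace_scatteringTransfer,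
    apply_one_one_of_mem_unitaryGroup hN, star_def]
  simp only [map_mul, map_add, map_inv₀, ← inv_eq_conj hμ, ← inv_eq_conj hδ]
  field_simp
  ring

end Scattering

lemma exists_eq_smul_iff {K : Type*} [Field K] {u v : Fin 2 → K} (hv : v ≠ 0) :
    (∃ k : K, u = k • v) ↔ v 0 * u 1 = v 1 * u 0 := by
  constructor
  · rintro ⟨k, rfl⟩
    simp only [Pi.smul_apply, smul_eq_mul]
    ring
  · intro h
    have cross : ∀ i j, u j * v i = u i * v j := by
      simp only [Fin.forall_fin_two]
      exact ⟨⟨trivial, by linear_combination h⟩, by linear_combination -h, trivial⟩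
    obtain ⟨i, hi⟩ := Function.ne_iff.1 hv
    refine ⟨u i / v i, funext fun j => ?_⟩
    rw [Pi.smul_apply, smul_eq_mul, div_mul_eq_mul_div, ← cross, mul_div_cancel_right₀ _ hi]

lemma star_exp_mul_exp (lam : ℝ) : star (exp (lam * I)) * exp (lam * I) = 1 := by
  rw [star_def, conj_mul', norm_exp_ofReal_mul_I, ofReal_one, one_pow]

section Site

variable {M : Matrix (Fin 3) (Fin 3) ℂ} {μ : ℂ} {lam : ℝ} {p q : Fin 2 → ℂ}

lemma transfer_eq_scatteringTransfer (hM : M ∈ unitaryGroup (Fin 3) ℂ)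
    (hne : exp (lam * I) ≠ M 1 1) :
    transfer M lam = scatteringTransfer (eliminate M 1 (exp (lam * I))) (exp (lam * I)) := by
  have hμ : exp (lam * I) ≠ 0 := exp_ne_zero _
  have hdet := sub_mul_det_eliminate_one hM hne
  have hcoin := sub_smul_eliminate_one hM hne
  rw [transfer, scatteringTransfer, exp_neg]
  generalize exp (lam * I) = μ at *
  have he : μ - M 1 1 ≠ 0 := sub_ne_zero.2 hne
  have h00 : (μ - M 1 1) * eliminate M 1 μ 0 0 = _ := congrFun (congrFun hcoin 0) 0
  have h01 : (μ - M 1 1) * eliminate M 1 μ 0 1 = _ := congrFun (congrFun hcoin 0) 1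
  have h10 : (μ - M 1 1) * eliminate M 1 μ 1 0 = _ := congrFun (congrFun hcoin 1) 0
  simp only [of_apply, cons_val', cons_val_zero, cons_val_one, cons_val_fin_one] at h00 h01 h10
  have hnum : !![μ * (μ - M 1 1), -(M 0 2 * μ) - M.det * conj (M 2 0);
      M 2 0 * μ + M.det * conj (M 0 2), -(M.det * (μ⁻¹ - conj (M 1 1)))] =
      (μ - M 1 1) • !![μ, -eliminate M 1 μ 0 1;
        eliminate M 1 μ 1 0, (eliminate M 1 μ).det * μ⁻¹] := by
    have h11 : -(M.det * (μ⁻¹ - conj (M 1 1))) =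
        (μ - M 1 1) * ((eliminate M 1 μ).det * μ⁻¹) := by
      field_simp
      linear_combination -hdet
    rw [← neg_add', ← h01, ← h10, h11]
    ext i j
    fin_cases i <;> fin_cases j <;> simp [mul_comm]
  rw [hnum, ← h00, smul_smul, _root_.mul_inv_rev, inv_mul_cancel_right₀ he]

lemma scatters_iff_transfer_mulVec (hM : M ∈ unitaryGroup (Fin 3) ℂ)
    (hne : exp (lam * I) ≠ M 1 1) (hA : coefA M lam ≠ 0) :
    Scatters (eliminate M 1 (exp (lam * I))) (exp (lam * I)) p q ↔ transfer M lam *ᵥ p = q := by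
  rw [transfer_eq_scatteringTransfer hM hne]
  exact scatters_iff_scatteringTransfer_mulVec (exp_ne_zero _) hA

lemma norm_det_transfer (hM : M ∈ unitaryGroup (Fin 3) ℂ) (hne : exp (lam * I) ≠ M 1 1)
    (hA : coefA M lam ≠ 0) : ‖(transfer M lam).det‖ = 1 := by
  rw [transfer_eq_scatteringTransfer hM hne]
  exact norm_det_scatteringTransfer (eliminate_mem_unitaryGroup hM (star_exp_mul_exp lam) hne)
    (exp_ne_zero _) hA

lemma det_mul_conj_trace_transfer (hM : M ∈ unitaryGroup (Fin 3) ℂ) (hne : exp (lam * I) ≠ M 1 1)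
    (hA : coefA M lam ≠ 0) :
    (transfer M lam).det * conj (transfer M lam).trace = (transfer M lam).trace := by
  rw [transfer_eq_scatteringTransfer hM hne]
  exact det_mul_conj_trace_scatteringTransfer
    (eliminate_mem_unitaryGroup hM (star_exp_mul_exp lam) hne) (norm_exp_ofReal_mul_I lam) hA

lemma apply_two_two_mul_of_eliminate_eq_zero (hM : M ∈ unitaryGroup (Fin 3) ℂ)
    (hμ : star μ * μ = 1) (hne : μ ≠ M 1 1) (hA : eliminate M 1 μ 0 0 = 0) :
    eliminate M 1 μ 1 1 = 0 ∧ M 2 2 * μ = M.det * conj (M 0 0) := by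
  have hD := apply_one_one_of_mem_unitaryGroup (eliminate_mem_unitaryGroup hM hμ hne)
  rw [hA, star_zero, mul_zero] at hD
  have h : (μ - M 1 1) * eliminate M 1 μ 1 1 = M 2 2 * μ - M.det * conj (M 0 0) :=
    congrFun (congrFun (sub_smul_eliminate_one hM hne) 1) 1
  exact ⟨hD, by rwa [hD, mul_zero, eq_comm, sub_eq_zero] at h⟩

lemma ne_zero_of_eliminate_eq_zero (hM : M ∈ unitaryGroup (Fin 3) ℂ) (hμ : star μ * μ = 1)
    (hne : μ ≠ M 1 1) (h13 : ‖M 0 2‖ ≠ 1) (h31 : ‖M 2 0‖ ≠ 1) (hA : eliminate M 1 μ 0 0 = 0) :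
    (M 0 0 ≠ 0 ∧ M 2 2 ≠ 0) ∧ (M 0 1 ≠ 0 ∧ M 1 0 ≠ 0) ∧ M 1 2 ≠ 0 ∧ M 2 1 ≠ 0 := by
  have hA' : M 0 0 + M 0 1 * M 1 0 / (μ - M 1 1) = 0 := hA
  obtain ⟨hD, h22⟩ := apply_two_two_mul_of_eliminate_eq_zero hM hμ hne hA
  have hD' : M 2 2 + M 2 1 * M 1 2 / (μ - M 1 1) = 0 := hD
  have h01 : M 0 1 ≠ 0 := fun h => h13 <| norm_apply_eq_one_of_row hM fun k hk => by
    fin_cases k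
    · simpa [h] using hA'
    · exact h
    · exact absurd rfl hk
  have h10 : M 1 0 ≠ 0 := fun h => h31 <| norm_apply_eq_one_of_col hM fun k hk => by
    fin_cases k
    · simpa [h] using hA'
    · exact h
    · exact absurd rfl hk
  have h00 : M 0 0 ≠ 0 := fun h => by simp [h, h01, h10, sub_ne_zero.2 hne] at hA'
  have hdet : M.det ≠ 0 := fun h => one_ne_zero <| by
    rw [← norm_det_of_mem_unitaryGroup hM, h, norm_zero]
  have h22' : M 2 2 ≠ 0 := left_ne_zero_of_mul (h22 ▸ mul_ne_zero hdet ((map_ne_zero _).2 h00))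
  exact ⟨⟨h00, h22'⟩, ⟨h01, h10⟩, fun h => h22' (by simpa [h] using hD'),
    fun h => h22' (by simpa [h] using hD')⟩

lemma vecA_zero_mul (hM : M ∈ unitaryGroup (Fin 3) ℂ)
    (hμ : star μ * μ = 1) (hne : μ ≠ M 1 1) (hA : eliminate M 1 μ 0 0 = 0) :
    vecA M 0 * μ = vecA M 1 * eliminate M 1 μ 0 1 := by
  have h22 := (apply_two_two_mul_of_eliminate_eq_zero hM hμ hne hA).2
  have h21 : M.det * conj (M 2 1) = M 1 0 * eliminate M 1 μ 0 1 := by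
    have hA' : M 0 0 + M 0 1 * M 1 0 / (μ - M 1 1) = 0 := hA
    have hB : eliminate M 1 μ 0 1 = M 0 2 + M 0 1 * M 1 2 / (μ - M 1 1) := rfl
    have cofactor : M.adjugate 1 2 = M.det * conj (M 2 1) := by
      simp [adjugate_of_mem_unitaryGroup hM]
    rw [← cofactor, adjugate_fin_three, hB]
    simp only [of_apply, cons_val', cons_val_one, cons_val, cons_val_fin_one]
    linear_combination -M 1 2 * hA'
  simp only [vecA, cons_val_zero, cons_val_one, cons_val_fin_one]
  linear_combination conj (M 2 1) * h22 + conj (M 0 0) * h21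

lemma vecB_one_mul (hM : M ∈ unitaryGroup (Fin 3) ℂ)
    (hμ : star μ * μ = 1) (hne : μ ≠ M 1 1) (hA : eliminate M 1 μ 0 0 = 0) :
    vecB M 1 * μ = vecB M 0 * eliminate M 1 μ 1 0 := by
  have eliminate_transpose : eliminate Mᵀ 1 μ = (eliminate M 1 μ)ᵀ := by
    ext i j
    simp [eliminate, mul_comm]
  simpa [vecA, vecB, eliminate_transpose] using
    vecA_zero_mul (transpose_mem_unitaryGroup_iff.2 hM) hμ hne (by rwa [eliminate_transpose])

lemma scatters_iff_of_eliminate_eq_zero (hM : M ∈ unitaryGroup (Fin 3) ℂ)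
    (hμ : star μ * μ = 1) (hne : μ ≠ M 1 1) (h13 : ‖M 0 2‖ ≠ 1) (h31 : ‖M 2 0‖ ≠ 1)
    (hA : eliminate M 1 μ 0 0 = 0) :
    Scatters (eliminate M 1 μ) μ p q ↔
      (∃ k : ℂ, p = k • vecA M) ∧ ∃ k : ℂ, q = k • vecB M := by
  obtain ⟨⟨h00, -⟩, ⟨h01, h10⟩, -⟩ := ne_zero_of_eliminate_eq_zero hM hμ hne h13 h31 hA
  have hD := (apply_two_two_mul_of_eliminate_eq_zero hM hμ hne hA).1
  have hμ0 : μ ≠ 0 := right_ne_zero_of_mul_eq_one hμ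
  have hA1 : vecA M 1 ≠ 0 := by simp [vecA, h00, h10]
  have hB0 : vecB M 0 ≠ 0 := by simp [vecB, h00, h01]
  have hAμ := vecA_zero_mul hM hμ hne hA
  have hBμ := vecB_one_mul hM hμ hne hA
  rw [scatters_iff, hA, hD, zero_mul, zero_add, zero_mul, add_zero,
    exists_eq_smul_iff (Function.ne_iff.2 ⟨1, hA1⟩),
    exists_eq_smul_iff (Function.ne_iff.2 ⟨0, hB0⟩)]
  refine and_congr ⟨fun h => mul_right_cancel₀ hμ0 ?_, fun h => mul_left_cancel₀ hA1 ?_⟩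
    ⟨fun h => mul_right_cancel₀ hμ0 ?_, fun h => mul_left_cancel₀ hB0 ?_⟩
  · linear_combination p 1 * hAμ + vecA M 1 * h
  · linear_combination μ * h - p 1 * hAμ
  · linear_combination -q 0 * hBμ - vecB M 0 * h
  · linear_combination -q 0 * hBμ - μ * h

lemma algCond_iff_of_eliminate_eq_zero (hM : M ∈ unitaryGroup (Fin 3) ℂ)
    (hμ : star μ * μ = 1) (hne : μ ≠ M 1 1) (h13 : ‖M 0 2‖ ≠ 1) (h31 : ‖M 2 0‖ ≠ 1)
    (hA : eliminate M 1 μ 0 0 = 0) :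
    algCond M ↔ ∃ k : ℂ, k ≠ 0 ∧ vecB M = k • vecA M := by
  obtain ⟨⟨h00, -⟩, ⟨h01, h10⟩, h12, h21⟩ := ne_zero_of_eliminate_eq_zero hM hμ hne h13 h31 hA
  have hA0 : vecA M ≠ 0 := Function.ne_iff.2 ⟨1, by simp [vecA, h00, h10]⟩
  have hB0 : vecB M ≠ 0 := Function.ne_iff.2 ⟨0, by simp [vecB, h00, h01]⟩
  have hk (k : ℂ) : k ≠ 0 ∧ vecB M = k • vecA M ↔ vecB M = k • vecA M :=
    and_iff_right_of_imp fun h => left_ne_zero_of_smul (h ▸ hB0)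
  simp only [hk, exists_eq_smul_iff hA0]
  rw [algCond, div_pow, div_eq_div_iff (by simpa using h00) (by simp [h12, h21])]
  simp only [vecA, vecB, cons_val_zero, cons_val_one, cons_val_fin_one]
  constructor <;> intro h <;> linear_combination h

lemma scatters_iff_transfer_mulVec_or_vecA_vecB (hM : M ∈ unitaryGroup (Fin 3) ℂ)
    (hne : exp (lam * I) ≠ M 1 1) (h13 : ‖M 0 2‖ ≠ 1) (h31 : ‖M 2 0‖ ≠ 1) :
    Scatters (eliminate M 1 (exp (lam * I))) (exp (lam * I)) p q ↔
      (coefA M lam ≠ 0 → transfer M lam *ᵥ p = q) ∧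
        (coefA M lam = 0 → (∃ k : ℂ, p = k • vecA M) ∧ ∃ k : ℂ, q = k • vecB M) := by
  by_cases hA : coefA M lam = 0
  · simp only [hA, ne_eq, not_true_eq_false, false_imp_iff, true_imp_iff, true_and]
    exact scatters_iff_of_eliminate_eq_zero hM (star_exp_mul_exp lam) hne h13 h31 hA
  · simp only [hA, ne_eq, not_false_eq_true, false_imp_iff, true_imp_iff, and_true]
    exact scatters_iff_transfer_mulVec hM hne hA

end Site

section SquareSummable

variable {ι : Type*}

lemma summable_norm_sq_of_norm_le {E F G : Type*} [SeminormedAddCommGroup E]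
    [SeminormedAddCommGroup F] [SeminormedAddCommGroup G] {f : ι → E} {g : ι → F} {h : ι → G}
    (hg : Summable fun x => ‖g x‖ ^ 2) (hh : Summable fun x => ‖h x‖ ^ 2) (C : ℝ)
    (hf : ∀ x, ‖f x‖ ≤ C * (‖g x‖ + ‖h x‖)) : Summable fun x => ‖f x‖ ^ 2 := by
  refine ((hg.add hh).mul_left (C ^ 2 * 2)).of_nonneg_of_le (fun _ => sq_nonneg _) fun x => ?_
  calc ‖f x‖ ^ 2 ≤ (C * (‖g x‖ + ‖h x‖)) ^ 2 := pow_le_pow_left₀ (norm_nonneg _) (hf x) 2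
    _ ≤ C ^ 2 * 2 * (‖g x‖ ^ 2 + ‖h x‖ ^ 2) := by
      rw [mul_pow, mul_assoc]
      gcongr
      exact add_sq_le

variable {κ : Type*} [Fintype κ] {E : κ → Type*} [∀ i, SeminormedAddCommGroup (E i)]
  {f : ι → ∀ i, E i}

lemma summable_sum_norm_sq_iff :
    (Summable fun x => ∑ i, ‖f x i‖ ^ 2) ↔ ∀ i, Summable fun x => ‖f x i‖ ^ 2 :=
  ⟨fun h i => h.of_nonneg_of_le (fun _ => sq_nonneg _) fun x =>
    Finset.single_le_sum (f := fun i => ‖f x i‖ ^ 2) (fun _ _ => sq_nonneg _) (Finset.mem_univ i),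
    fun h => summable_sum fun i _ => h i⟩

lemma summable_pi_norm_sq_iff :
    (Summable fun x => ‖f x‖ ^ 2) ↔ ∀ i, Summable fun x => ‖f x i‖ ^ 2 := by
  refine ⟨fun h i => h.of_nonneg_of_le (fun _ => sq_nonneg _) fun x => ?_, fun h => ?_⟩
  · exact pow_le_pow_left₀ (norm_nonneg _) (norm_le_pi_norm _ _) 2
  · refine (summable_sum_norm_sq_iff.2 h).of_nonneg_of_le (fun _ => sq_nonneg _) fun x => ?_
    rw [← Real.le_sqrt (norm_nonneg _) (by positivity), pi_norm_le_iff_of_nonneg (by positivity)]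
    exact fun i => Real.le_sqrt_of_sq_le <|
      Finset.single_le_sum (f := fun i => ‖f x i‖ ^ 2) (fun _ _ => sq_nonneg _) (Finset.mem_univ i)

end SquareSummable

section Reduction

variable {a : ℤ → Matrix (Fin 3) (Fin 3) ℂ} {μ : ℂ}

lemma isQWEigenvalue_iff_exists_mulVec : IsQWEigenvalue a μ ↔
    ∃ Ψ : ℤ → Fin 3 → ℂ, Ψ ≠ 0 ∧ (∀ i, Summable fun x => ‖Ψ x i‖ ^ 2) ∧
      ∀ x, a x *ᵥ Ψ x = μ • ![Ψ (x - 1) 0, Ψ x 1, Ψ (x + 1) 2] := by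
  rw [IsQWEigenvalue]
  refine exists_congr fun Ψ => and_congr_right fun _ => and_congr summable_sum_norm_sq_iff
    ⟨fun h x => ?_, fun h x => ⟨?_, ?_, ?_⟩⟩
  · have h0 := (h (x - 1)).1
    have h2 := (h (x + 1)).2.2
    rw [sub_add_cancel] at h0
    rw [add_sub_cancel_right] at h2
    ext i
    fin_cases i
    exacts [h0.symm, (h x).2.1.symm, h2.symm]
  · simpa [mulVec, dotProduct] using (congrFun (h (x + 1)) 0).symm
  · exact (congrFun (h x) 1).symm
  · simpa [mulVec, dotProduct] using (congrFun (h (x - 1)) 2).symm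

lemma isQWEigenvalue_iff_exists_pair : IsQWEigenvalue a μ ↔
    ∃ (p : ℤ → Fin 2 → ℂ) (m : ℤ → ℂ), (p ≠ 0 ∨ m ≠ 0) ∧ (Summable fun x => ‖p x‖ ^ 2) ∧
      (Summable fun x => ‖m x‖ ^ 2) ∧
      ∀ x, a x *ᵥ ![p (x + 1) 0, m x, p x 1] = μ • ![p x 0, m x, p (x + 1) 1] := by
  have shift (f : ℤ → ℝ) (k : ℤ) : (Summable fun x => f (x + k)) ↔ Summable f :=
    (Equiv.addRight k).summable_iff
  rw [isQWEigenvalue_iff_exists_mulVec]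
  simp only [summable_pi_norm_sq_iff, Fin.forall_fin_two]
  constructor
  · rintro ⟨Ψ, hΨ, hs, h⟩
    refine ⟨fun x => ![Ψ (x - 1) 0, Ψ x 2], fun x => Ψ x 1, ?_,
      ⟨(shift (fun x => ‖Ψ x 0‖ ^ 2) (-1)).2 (hs 0), hs 2⟩, hs 1, fun x => ?_⟩
    · contrapose! hΨ
      ext x i
      fin_cases i
      · simpa using congrFun (congrFun hΨ.1 (x + 1)) 0
      · exact congrFun hΨ.2 x
      · exact congrFun (congrFun hΨ.1 x) 1
    · have eta (v : Fin 3 → ℂ) : ![v 0, v 1, v 2] = v := List.ofFn_inj.1 rfl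
      simpa [eta] using h x
  · rintro ⟨p, m, hpm, ⟨h0, h1⟩, hm, h⟩
    refine ⟨fun x => ![p (x + 1) 0, m x, p x 1], fun hΨ => ?_, fun i => ?_, fun x => ?_⟩
    · have hp : p = 0 := by
        ext x i
        fin_cases i
        · simpa using congrFun (congrFun hΨ (x - 1)) 0
        · simpa using congrFun (congrFun hΨ x) 2
      exact hpm.elim (· hp) (· <| funext fun x => by simpa using congrFun (congrFun hΨ x) 1)
    · fin_cases i
      exacts [(shift (fun x => ‖p x 0‖ ^ 2) 1).2 h0, hm, h1]
    · simpa using h x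

lemma isQWEigenvalue_iff_exists_scatters (ha : (Set.range a).Finite) (hne : ∀ x, μ ≠ a x 1 1) :
    IsQWEigenvalue a μ ↔
      ∃ p : ℤ → Fin 2 → ℂ, p ≠ 0 ∧ (Summable fun x => ‖p x‖ ^ 2) ∧
        ∀ x, Scatters (eliminate (a x) 1 μ) μ (p x) (p (x + 1)) := by
  rw [isQWEigenvalue_iff_exists_pair]
  simp only [fun (p : ℤ → Fin 2 → ℂ) (m : ℤ → ℂ) x =>
    mulVec_eq_smul_iff_scatters (p := p x) (q := p (x + 1)) (hne x) (m x), forall_and]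
  constructor
  · rintro ⟨p, m, hpm, hp, -, hm, h⟩
    refine ⟨p, ?_, hp, h⟩
    rintro rfl
    exact hpm.elim (· rfl) (· <| funext fun x => by simp [hm])
  · rintro ⟨p, hp, hs, h⟩
    refine ⟨p, _, .inl hp, hs, ?_, fun _ => rfl, h⟩
    obtain ⟨C, hC⟩ := (ha.image fun N => (‖N 1 0‖ + ‖N 1 2‖) / ‖μ - N 1 1‖).bddAbove
    refine summable_norm_sq_of_norm_le
      (((Equiv.addRight (1 : ℤ)).summable_iff (f := fun x => ‖p x‖ ^ 2)).2 hs) hs C fun x => ?_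
    have hx : (‖a x 1 0‖ + ‖a x 1 2‖) / ‖μ - a x 1 1‖ ≤ C := hC ⟨a x, ⟨x, rfl⟩, rfl⟩
    calc ‖(a x 1 0 * p (x + 1) 0 + a x 1 2 * p x 1) / (μ - a x 1 1)‖
        ≤ (‖a x 1 0‖ * ‖p (x + 1)‖ + ‖a x 1 2‖ * ‖p x‖) / ‖μ - a x 1 1‖ := by
          rw [norm_div]
          gcongr
          refine (norm_add_le _ _).trans ?_
          rw [norm_mul, norm_mul]
          gcongr <;> exact norm_le_pi_norm _ _
      _ ≤ (‖a x 1 0‖ + ‖a x 1 2‖) / ‖μ - a x 1 1‖ * (‖p (x + 1)‖ + ‖p x‖) := by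
          rw [div_mul_eq_mul_div]
          gcongr
          nlinarith [norm_nonneg (a x 1 0), norm_nonneg (a x 1 2), norm_nonneg (p x),
            norm_nonneg (p (x + 1))]
      _ ≤ C * (‖p (x + 1)‖ + ‖p x‖) := by gcongr

lemma isQWEigenvalue_iff_of_one_defect {M C₀ : Matrix (Fin 3) (Fin 3) ℂ} (ha0 : a 0 = C₀)
    (hax : ∀ x, x ≠ 0 → a x = M) (hne : μ ≠ M 1 1) (hne0 : μ ≠ C₀ 1 1) :
    IsQWEigenvalue a μ ↔
      ∃ p : ℤ → Fin 2 → ℂ, p ≠ 0 ∧ Scatters (eliminate C₀ 1 μ) μ (p 0) (p 1) ∧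
        (Summable fun x => ‖p x‖ ^ 2) ∧
        ∀ x, x ≠ 0 → Scatters (eliminate M 1 μ) μ (p x) (p (x + 1)) := by
  obtain rfl : a = fun x => if x = 0 then C₀ else M := by
    funext x
    split_ifs with hx
    exacts [hx ▸ ha0, hax x hx]
  have hrange : (Set.range fun x : ℤ => if x = 0 then C₀ else M).Finite :=
    (Set.toFinite {C₀, M}).subset (Set.range_subset_iff.2 fun x => by grind)
  rw [isQWEigenvalue_iff_exists_scatters hrange fun x => by grind]
  refine exists_congr fun p => and_congr_right fun _ => ?_
  rw [and_left_comm]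
  refine and_congr_right fun _ => ⟨fun h => ⟨h 0, fun x hx => by simpa [hx] using h x⟩, ?_⟩
  rintro ⟨h0, h⟩ x
  obtain rfl | hx := eq_or_ne x 0
  exacts [h0, by simpa [hx] using h x hx]

end Reduction

section Roots

lemma exists_roots_of_norm_eq_one {t d : ℂ} (hd : ‖d‖ = 1) :
    ∃ z w : ℂ, z + w = t ∧ z * w = d ∧ ‖z‖ ≤ 1 ∧ 1 ≤ ‖w‖ := by
  obtain ⟨s, hs⟩ := IsAlgClosed.exists_pow_nat_eq (t ^ 2 - 4 * d) two_pos
  have hadd : (t + s) / 2 + (t - s) / 2 = t := by ring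
  have hmul : (t + s) / 2 * ((t - s) / 2) = d := by linear_combination (-1 / 4 : ℂ) * hs
  generalize (t + s) / 2 = z, (t - s) / 2 = w at hadd hmul
  have hnorm : ‖z‖ * ‖w‖ = 1 := by rw [← norm_mul, hmul, hd]
  rcases le_total ‖z‖ 1 with h | h
  · exact ⟨z, w, hadd, hmul, h, by nlinarith [norm_nonneg w]⟩
  · exact ⟨w, z, by rw [add_comm, hadd], by rw [mul_comm, hmul], by nlinarith [norm_nonneg w], h⟩

lemma sq_sub_add_mul_eq_zero_iff {R : Type*} [CommRing R] [NoZeroDivisors R] {z w ζ : R} :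
    ζ ^ 2 - (z + w) * ζ + z * w = 0 ↔ ζ = z ∨ ζ = w := by
  rw [← sub_eq_zero (a := ζ) (b := z), ← sub_eq_zero (a := ζ) (b := w), ← mul_eq_zero]
  ring_nf

/-- The symmetry forces `w = ‖w‖² z`, so `z` and `w` are parallel and `‖z + w‖ = ‖z‖ + ‖w‖`. -/
lemma two_lt_norm_add {z w : ℂ} (hsymm : z * w * conj (z + w) = z + w) (hzw : ‖z * w‖ = 1)
    (hz : ‖z‖ ≠ 1) : 2 < ‖z + w‖ := by
  rw [norm_mul] at hzw
  have hzw2 : (‖z‖ : ℂ) ^ 2 * (‖w‖ : ℂ) ^ 2 = 1 := by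
    rw [← mul_pow, ← ofReal_mul, hzw, ofReal_one, one_pow]
  have hz2 : (‖z‖ : ℂ) ^ 2 - 1 ≠ 0 := by
    rw [sub_ne_zero]
    exact_mod_cast fun h => hz ((pow_eq_one_iff_of_nonneg (norm_nonneg z) two_ne_zero).1 h)
  have hpar : w = (‖w‖ ^ 2 : ℝ) * z := by
    refine mul_left_cancel₀ hz2 ?_
    rw [map_add] at hsymm
    push_cast
    linear_combination hsymm - w * mul_conj' z - z * mul_conj' w - z * hzw2
  have hadd : ‖z + w‖ = ‖z‖ + ‖w‖ := by
    rw [hpar, ← real_smul, SameRay.norm_add (SameRay.sameRay_nonneg_smul_right _ (by positivity))]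
  rw [hadd]
  nlinarith [sq_pos_of_ne_zero (sub_ne_zero.2 hz), norm_nonneg w, norm_nonneg z]

end Roots

section Recurrence

lemma eq_pow_smul_of_recurrence {R E : Type*} [CommRing R] [AddCommGroup E] [Module R E]
    {z w : R} {y : ℕ → E} (hy : ∀ n, y (n + 2) = (z + w) • y (n + 1) - (z * w) • y n)
    (h : y 1 = z • y 0) (n : ℕ) : y n = z ^ n • y 0 := by
  have step (n : ℕ) : y (n + 1) = z • y n := by
    induction n with
    | zero => exact h
    | succ n ih => rw [hy, ih]; module
  induction n with
  | zero => rw [pow_zero, one_smul]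
  | succ n ih => rw [step, ih, smul_smul, pow_succ']

variable {𝕜 E : Type*} [NormedField 𝕜] [NormedAddCommGroup E] [NormedSpace 𝕜 E]
  {z w : 𝕜} {y : ℕ → E}

/-- `y (n + 1) - z • y n` is multiplied by `w` at each step, so it decays only if it is zero. -/
lemma apply_one_eq_smul_of_tendsto_zero
    (hy : ∀ n, y (n + 2) = (z + w) • y (n + 1) - (z * w) • y n) (hw : 1 ≤ ‖w‖)
    (h0 : Filter.Tendsto y Filter.atTop (nhds 0)) : y 1 = z • y 0 := by
  have hmono : Monotone fun n => ‖y (n + 1) - z • y n‖ := monotone_nat_of_le_succ fun n => by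
    have hstep : y (n + 2) - z • y (n + 1) = w • (y (n + 1) - z • y n) := by rw [hy]; module
    rw [hstep, norm_smul]
    exact le_mul_of_one_le_left (norm_nonneg _) hw
  have hlim : Filter.Tendsto (fun n => ‖y (n + 1) - z • y n‖) Filter.atTop (nhds 0) := by
    simpa using ((h0.comp (Filter.tendsto_add_atTop_nat 1)).sub (h0.const_smul z)).norm
  exact sub_eq_zero.1 (norm_le_zero_iff.1 (hmono.ge_of_tendsto hlim 0))

lemma summable_norm_sq_iff_of_recurrence
    (hy : ∀ n, y (n + 2) = (z + w) • y (n + 1) - (z * w) • y n) (hw : 1 ≤ ‖w‖) :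
    (Summable fun n => ‖y n‖ ^ 2) ↔ y 1 = z • y 0 ∧ (y 0 = 0 ∨ ‖z‖ < 1) := by
  have hgeom (h : y 1 = z • y 0) :
      (Summable fun n => ‖y n‖ ^ 2) ↔ y 0 = 0 ∨ ‖z‖ < 1 := by
    have hterm (n : ℕ) : ‖y n‖ ^ 2 = (‖z‖ ^ 2) ^ n * ‖y 0‖ ^ 2 := by
      rw [eq_pow_smul_of_recurrence hy h, norm_smul, norm_pow, mul_pow, pow_right_comm]
    rw [summable_congr hterm]
    by_cases h0 : y 0 = 0
    · simp [h0, summable_zero]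
    · rw [summable_mul_right_iff (pow_ne_zero 2 (norm_ne_zero_iff.2 h0)),
        summable_geometric_iff_norm_lt_one]
      simp [h0]
  refine ⟨fun hs => ?_, fun ⟨h, h'⟩ => (hgeom h).2 h'⟩
  have h0 : Filter.Tendsto y Filter.atTop (nhds 0) := by
    have h := hs.tendsto_atTop_zero.sqrt
    simp only [Real.sqrt_sq (norm_nonneg _), Real.sqrt_zero] at h
    exact tendsto_zero_iff_norm_tendsto_zero.2 h
  have h := apply_one_eq_smul_of_tendsto_zero hy hw h0
  exact ⟨h, (hgeom h).1 hs⟩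

end Recurrence

section Dynamics

lemma mulVec_mulVec_fin_two {R : Type*} [CommRing R] [Nontrivial R]
    (T : Matrix (Fin 2) (Fin 2) R) (v : Fin 2 → R) :
    T *ᵥ (T *ᵥ v) = T.trace • T *ᵥ v - T.det • v := by
  have cayley : T ^ 2 - T.trace • T + T.det • 1 = 0 := by
    simpa [charpoly_fin_two, Algebra.smul_def] using T.aeval_self_charpoly
  rw [mulVec_mulVec, ← sq, ← sub_eq_zero, ← zero_mulVec v, ← cayley, add_mulVec, sub_mulVec,
    smul_mulVec, smul_mulVec, one_mulVec, sub_add]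

lemma trace_inv_fin_two {K : Type*} [Field K] (T : Matrix (Fin 2) (Fin 2) K) :
    T⁻¹.trace = T.det⁻¹ * T.trace := by
  rw [Matrix.inv_def, trace_smul, adjugate_fin_two, trace_fin_two_of, trace_fin_two,
    add_comm (T 0 0), Ring.inverse_eq_inv', smul_eq_mul]

lemma inv_mulVec_eq_iff {n R : Type*} [Fintype n] [DecidableEq n] [CommRing R] {T : Matrix n n R}
    (hT : IsUnit T.det) {u v : n → R} : T⁻¹ *ᵥ u = v ↔ u = T *ᵥ v := by
  constructor <;> rintro rfl
  · rw [mulVec_mulVec, mul_nonsing_inv _ hT, one_mulVec]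
  · rw [mulVec_mulVec, nonsing_inv_mul _ hT, one_mulVec]

lemma eq_zero_of_mulVec_eq_apply_add_one {n R : Type*} [Fintype n] [DecidableEq n] [CommRing R]
    {T : Matrix n n R} {p : ℤ → n → R} (hT : IsUnit T.det)
    (h : ∀ x, x ≠ 0 → T *ᵥ p x = p (x + 1)) (h0 : p 0 = 0) (h1 : p 1 = 0) : p = 0 := by
  funext x
  induction x with
  | zero => exact h0
  | succ k ih =>
    obtain rfl | hk := eq_or_ne k 0
    · simpa using h1
    · rw [← h k (by exact_mod_cast hk), ih, Pi.zero_apply, mulVec_zero, Pi.zero_apply]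
  | pred k ih =>
    have hstep := h (-k - 1) (by omega)
    rw [sub_add_cancel, ih, eq_comm, ← inv_mulVec_eq_iff hT] at hstep
    rw [← hstep, Pi.zero_apply, mulVec_zero, Pi.zero_apply]

variable {T : Matrix (Fin 2) (Fin 2) ℂ} {z w : ℂ}

lemma summable_norm_sq_nat_iff_of_mulVec {y : ℕ → Fin 2 → ℂ} (hadd : z + w = T.trace)
    (hmul : z * w = T.det) (hw : 1 ≤ ‖w‖) (hy : ∀ n, T *ᵥ y n = y (n + 1)) :
    (Summable fun n => ‖y n‖ ^ 2) ↔ T *ᵥ y 0 = z • y 0 ∧ (y 0 = 0 ∨ ‖z‖ < 1) := by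
  rw [hy, summable_norm_sq_iff_of_recurrence (z := z) (w := w) (fun n => ?_) hw]
  rw [← hy (n + 1), ← hy n, mulVec_mulVec_fin_two, hadd, hmul]

/-- Time reversal: `T⁻¹` has the eigenvalues `w⁻¹` and `z⁻¹`. -/
lemma summable_norm_sq_nat_iff_of_mulVec_add_one {y : ℕ → Fin 2 → ℂ} (hadd : z + w = T.trace)
    (hmul : z * w = T.det) (hT : T.det ≠ 0) (hz : ‖z‖ ≤ 1) (hy : ∀ n, T *ᵥ y (n + 1) = y n) :
    (Summable fun n => ‖y n‖ ^ 2) ↔ T *ᵥ y 0 = w • y 0 ∧ (y 0 = 0 ∨ 1 < ‖w‖) := by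
  obtain ⟨hz0, hw0⟩ := mul_ne_zero_iff.1 (hmul ▸ hT)
  have hadd' : w⁻¹ + z⁻¹ = T⁻¹.trace := by
    rw [trace_inv_fin_two, ← hadd, ← hmul]
    field_simp
  have hmul' : w⁻¹ * z⁻¹ = T⁻¹.det := by
    rw [det_nonsing_inv, Ring.inverse_eq_inv', ← hmul, _root_.mul_inv_rev]
  have hz' : 1 ≤ ‖z⁻¹‖ := by
    rw [norm_inv]
    exact (one_le_inv₀ (norm_pos_iff.2 hz0)).2 hz
  rw [summable_norm_sq_nat_iff_of_mulVec hadd' hmul' hz' fun n =>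
    (inv_mulVec_eq_iff hT.isUnit).2 (hy n).symm, inv_mulVec_eq_iff hT.isUnit, mulVec_smul, eq_comm,
    inv_smul_eq_iff₀ hw0, norm_inv, inv_lt_one₀ (norm_pos_iff.2 hw0)]

lemma summable_norm_sq_int_iff_of_mulVec {p : ℤ → Fin 2 → ℂ} (hadd : z + w = T.trace)
    (hmul : z * w = T.det) (hdet : ‖T.det‖ = 1) (hz : ‖z‖ ≤ 1) (hw : 1 ≤ ‖w‖) (hp : p ≠ 0)
    (h : ∀ x, x ≠ 0 → T *ᵥ p x = p (x + 1)) :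
    (Summable fun x => ‖p x‖ ^ 2) ↔ ‖z‖ < 1 ∧ T *ᵥ p 1 = z • p 1 ∧ T *ᵥ p 0 = w • p 0 := by
  have hT : T.det ≠ 0 := norm_ne_zero_iff.1 (hdet ▸ one_ne_zero)
  have hright := summable_norm_sq_nat_iff_of_mulVec (y := fun n => p ((n + 1 : ℕ) : ℤ)) hadd hmul hw
    fun n => h _ (by omega)
  have hleft := summable_norm_sq_nat_iff_of_mulVec_add_one (y := fun n => p (-n)) hadd hmul hT hz
    fun n => by rw [h _ (by omega), Nat.cast_add_one, neg_add, neg_add_cancel_right]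
  have hnz : p 1 ≠ 0 ∨ p 0 ≠ 0 := by
    contrapose! hp
    exact eq_zero_of_mulVec_eq_apply_add_one hT.isUnit h hp.2 hp.1
  have hzw : 1 < ‖w‖ ↔ ‖z‖ < 1 := by
    have hnorm : ‖z‖ * ‖w‖ = 1 := by rw [← norm_mul, hmul, hdet]
    constructor <;> intro <;> nlinarith
  rw [summable_int_iff_summable_nat_and_neg, ← summable_nat_add_iff 1, hright, hleft, hzw]
  simp only [zero_add, Nat.cast_one, Nat.cast_zero, neg_zero]
  constructor
  · rintro ⟨⟨h1, h1z⟩, h0, h0z⟩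
    exact ⟨hnz.elim h1z.resolve_left h0z.resolve_left, h1, h0⟩
  · rintro ⟨hz1, h1, h0⟩
    exact ⟨⟨h1, .inr hz1⟩, h0, .inr hz1⟩

lemma summable_norm_sq_int_iff_exists_eigenvalue {p : ℤ → Fin 2 → ℂ} (hdet : ‖T.det‖ = 1)
    (hsymm : T.det * conj T.trace = T.trace) (hp : p ≠ 0)
    (h : ∀ x, x ≠ 0 → T *ᵥ p x = p (x + 1)) :
    (Summable fun x => ‖p x‖ ^ 2) ↔ 2 < ‖T.trace‖ ∧
      (∃ ζ : ℂ, ζ ^ 2 - T.trace * ζ + T.det = 0 ∧ ‖ζ‖ < 1 ∧ T *ᵥ p 1 = ζ • p 1) ∧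
      ∃ ζ : ℂ, ζ ^ 2 - T.trace * ζ + T.det = 0 ∧ 1 < ‖ζ‖ ∧ T *ᵥ p 0 = ζ • p 0 := by
  obtain ⟨z, w, hadd, hmul, hz, hw⟩ := exists_roots_of_norm_eq_one (t := T.trace) hdet
  have hnorm : ‖z‖ * ‖w‖ = 1 := by rw [← norm_mul, hmul, hdet]
  rw [summable_norm_sq_int_iff_of_mulVec hadd hmul hdet hz hw hp h]
  simp only [← hadd, ← hmul, sq_sub_add_mul_eq_zero_iff] at hsymm hdet ⊢
  constructor
  · rintro ⟨hz1, h1, h0⟩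
    exact ⟨two_lt_norm_add hsymm hdet hz1.ne, ⟨z, .inl rfl, hz1, h1⟩,
      w, .inr rfl, by nlinarith, h0⟩
  · rintro ⟨-, ⟨ζ, rfl | rfl, hζ, h1⟩, ξ, rfl | rfl, hξ, h0⟩
    · exact absurd hξ hz.not_gt
    · exact ⟨hζ, h1, h0⟩
    · exact absurd hζ hw.not_gt
    · exact absurd hζ hw.not_gt

lemma summable_and_forall_mulVec_iff {p : ℤ → Fin 2 → ℂ} (hdet : ‖T.det‖ = 1)
    (hsymm : T.det * conj T.trace = T.trace) (hp : p ≠ 0) :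
    ((Summable fun x => ‖p x‖ ^ 2) ∧ ∀ x, x ≠ 0 → T *ᵥ p x = p (x + 1)) ↔
      2 < ‖T.trace‖ ∧ (∀ x, 1 ≤ x → T *ᵥ p x = p (x + 1)) ∧
        (∀ x, x < 0 → T *ᵥ p x = p (x + 1)) ∧
        (∃ ζ : ℂ, ζ ^ 2 - T.trace * ζ + T.det = 0 ∧ ‖ζ‖ < 1 ∧ T *ᵥ p 1 = ζ • p 1) ∧
        ∃ ζ : ℂ, ζ ^ 2 - T.trace * ζ + T.det = 0 ∧ 1 < ‖ζ‖ ∧ T *ᵥ p 0 = ζ • p 0 := by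
  have hsplit : (∀ x, x ≠ 0 → T *ᵥ p x = p (x + 1)) ↔
      (∀ x, 1 ≤ x → T *ᵥ p x = p (x + 1)) ∧ ∀ x, x < 0 → T *ᵥ p x = p (x + 1) := by
    simp only [ne_iff_lt_or_gt, or_imp, forall_and, and_comm, ← Int.add_one_le_iff,
      zero_add]
  rw [and_congr_left fun h => summable_norm_sq_int_iff_exists_eigenvalue hdet hsymm hp h, hsplit]
  tauto

end Dynamics

section Decoupling

lemma exists_finite_support_of_forall {ι E : Type*} [Zero E] {S : ι → E → Prop}
    (hS : ∀ x, S x 0) {p : ι → E} (hp : p ≠ 0) (h : ∀ x, S x (p x)) {F : Set ι} (hF : F.Finite) :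
    ∃ q : ι → E, q ≠ 0 ∧ q.support.Finite ∧ Set.EqOn q p F ∧ ∀ x, S x (q x) := by
  classical
  obtain ⟨x₀, hx₀⟩ := Function.ne_iff.1 hp
  refine ⟨(insert x₀ F).indicator p, Function.ne_iff.2 ⟨x₀, by simpa using hx₀⟩,
    (hF.insert x₀).subset Set.support_indicator_subset,
    fun x hx => Set.indicator_of_mem (Set.mem_insert_of_mem _ hx) p, fun x => ?_⟩
  rw [Set.indicator_apply]
  split_ifs
  exacts [h x, hS x]

lemma forall_ne_zero_and_apply_add_one_iff {E : Type*} {A B : E → Prop} {p : ℤ → E} :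
    (∀ x, x ≠ 0 → A (p x) ∧ B (p (x + 1))) ↔ ∀ x, (x ≠ 0 → A (p x)) ∧ (x ≠ 1 → B (p x)) := by
  refine ⟨fun h x => ⟨fun hx => (h x hx).1, fun hx => ?_⟩, fun h x hx => ⟨(h x).1 hx, ?_⟩⟩
  · simpa using (h (x - 1) (sub_ne_zero.2 hx)).2
  · exact (h (x + 1)).2 (by omega)

lemma forall_ne_zero_and_ne_one_iff {A B : ℤ → Prop} :
    (∀ x, (x ≠ 0 → A x) ∧ (x ≠ 1 → B x)) ↔ B 0 ∧ A 1 ∧ ∀ x, x ≠ 0 → x ≠ 1 → A x ∧ B x := by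
  refine ⟨fun h => ⟨(h 0).2 zero_ne_one, (h 1).1 one_ne_zero, fun x h0 h1 =>
    ⟨(h x).1 h0, (h x).2 h1⟩⟩, fun ⟨h0, h1, h⟩ x => ⟨fun hx0 => ?_, fun hx1 => ?_⟩⟩
  · obtain rfl | hx1 := eq_or_ne x 1
    exacts [h1, (h x hx0 hx1).1]
  · obtain rfl | hx0 := eq_or_ne x 0
    exacts [h0, (h x hx0 hx1).2]

/-- The conditions off the origin constrain each `p x` separately, so a solution can be truncated to
finitely many sites. -/
lemma exists_summable_iff_exists_finite_support {E : Type*} [NormedAddCommGroup E] {A B : E → Prop}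
    {R : E → E → Prop} (hA : A 0) (hB : B 0) :
    (∃ p : ℤ → E, p ≠ 0 ∧ R (p 0) (p 1) ∧ (Summable fun x => ‖p x‖ ^ 2) ∧
      ∀ x, x ≠ 0 → A (p x) ∧ B (p (x + 1))) ↔
    ∃ p : ℤ → E, p ≠ 0 ∧ R (p 0) (p 1) ∧ p.support.Finite ∧
      ∀ x, x ≠ 0 → A (p x) ∧ B (p (x + 1)) := by
  simp only [forall_ne_zero_and_apply_add_one_iff]
  constructor
  · rintro ⟨p, hp, hR, -, h⟩
    obtain ⟨q, hq, hfin, hqp, hqS⟩ := exists_finite_support_of_forall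
      (S := fun x v => (x ≠ 0 → A v) ∧ (x ≠ 1 → B v)) (fun _ => ⟨fun _ => hA, fun _ => hB⟩) hp h
      (Set.toFinite {0, 1})
    exact ⟨q, hq, by rwa [hqp (by simp), hqp (by simp)], hfin, hqS⟩
  · rintro ⟨p, hp, hR, hfin, h⟩
    exact ⟨p, hp, hR, summable_of_hasFiniteSupport (hfin.subset fun x hx => by simpa using hx), h⟩

variable {K E : Type*} [Field K] [AddCommGroup E] [Module K E] {u w : E}

lemma exists_smul_and_exists_smul_iff {v : E} :
    ((∃ k : K, v = k • u) ∧ ∃ k : K, v = k • w) ↔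
      ((∃ c : K, c ≠ 0 ∧ w = c • u) → ∃ k : K, v = k • u) ∧
        ((¬∃ c : K, c ≠ 0 ∧ w = c • u) → v = 0) := by
  by_cases hP : ∃ c : K, c ≠ 0 ∧ w = c • u
  · simp only [hP, true_imp_iff, not_true_eq_false, false_imp_iff, and_true, and_iff_left_iff_imp]
    obtain ⟨c, hc, rfl⟩ := hP
    rintro ⟨k, rfl⟩
    exact ⟨k / c, by rw [smul_smul, div_mul_cancel₀ _ hc]⟩
  · simp only [hP, false_imp_iff, true_and, not_false_eq_true, true_imp_iff]
    refine ⟨fun ⟨⟨k, hk⟩, l, hl⟩ => ?_, fun hv => ⟨⟨0, by simp [hv]⟩, 0, by simp [hv]⟩⟩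
    by_contra hv
    have hk0 : k ≠ 0 := left_ne_zero_of_smul (hk ▸ hv)
    have hl0 : l ≠ 0 := left_ne_zero_of_smul (hl ▸ hv)
    exact hP ⟨l⁻¹ * k, mul_ne_zero (inv_ne_zero hl0) hk0, by
      rw [← smul_smul, ← hk, hl, inv_smul_smul₀ hl0]⟩

variable {p : ℤ → E}

lemma finite_support_and_forall_exists_smul_iff :
    (p.support.Finite ∧ ∀ x, x ≠ 0 → (∃ k : K, p x = k • u) ∧ ∃ k : K, p (x + 1) = k • w) ↔
      (∃ k : K, p 0 = k • w) ∧ (∃ k : K, p 1 = k • u) ∧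
        ((∃ c : K, c ≠ 0 ∧ w = c • u) →
          (∀ x, x ≠ 0 → x ≠ 1 → ∃ k : K, p x = k • u) ∧
            {x | x ≠ 0 ∧ x ≠ 1 ∧ p x ≠ 0}.Finite) ∧
        ((¬∃ c : K, c ≠ 0 ∧ w = c • u) → ∀ x, x ≠ 0 → x ≠ 1 → p x = 0) := by
  have hfin : p.support.Finite ↔ {x | x ≠ 0 ∧ x ≠ 1 ∧ p x ≠ 0}.Finite :=
    ⟨fun h => h.subset fun x hx => hx.2.2, fun h =>
      (h.union (Set.toFinite {0, 1})).subset fun x hx => by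
        by_cases h0 : x = 0 <;> by_cases h1 : x = 1 <;> simp_all⟩
  rw [hfin, forall_ne_zero_and_apply_add_one_iff (A := fun v => ∃ k : K, v = k • u)
    (B := fun v => ∃ k : K, v = k • w), forall_ne_zero_and_ne_one_iff]
  simp only [exists_smul_and_exists_smul_iff]
  by_cases hP : ∃ c : K, c ≠ 0 ∧ w = c • u
  · simp only [hP, true_imp_iff, not_true_eq_false, false_imp_iff, and_true]
    tauto
  · simp only [hP, true_imp_iff, not_false_eq_true, false_imp_iff, true_and]
    refine ⟨fun h => h.2, fun h => ⟨Set.finite_empty.subset fun x hx => ?_, h⟩⟩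
    exact hx.2.2 (h.2.2 x hx.1 hx.2.1)

end Decoupling

/-- eigenvalue characterization for the one-defect three-state quantum
walk (coin `C₀` at the origin and `C` elsewhere). -/
theorem one_defect_eigenvalue_iff (a : ℤ → Matrix (Fin 3) (Fin 3) ℂ)
    (M C₀ : Matrix (Fin 3) (Fin 3) ℂ)
    (hM : M ∈ Matrix.unitaryGroup (Fin 3) ℂ) (hC₀ : C₀ ∈ Matrix.unitaryGroup (Fin 3) ℂ)
    (h13 : ‖M 0 2‖ ≠ 1) (h22 : ‖M 1 1‖ ≠ 1) (h31 : ‖M 2 0‖ ≠ 1)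
    (h13' : ‖C₀ 0 2‖ ≠ 1) (h22' : ‖C₀ 1 1‖ ≠ 1) (h31' : ‖C₀ 2 0‖ ≠ 1)
    (ha0 : a 0 = C₀) (hax : ∀ x : ℤ, x ≠ 0 → a x = M)
    (lam : ℝ) (hlam : lam ∈ Set.Ico 0 (2 * Real.pi))
    (hne : Complex.exp (lam * Complex.I) ≠ M 1 1)
    (hne0 : Complex.exp (lam * Complex.I) ≠ C₀ 1 1) :
    IsQWEigenvalue a (Complex.exp (lam * Complex.I)) ↔
      ∃ Ψ : ℤ → Fin 2 → ℂ, Ψ ≠ 0 ∧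
        -- Condition 1 (at the defect)
        ((coefA C₀ lam ≠ 0 → (transfer C₀ lam).mulVec (Ψ 0) = Ψ 1) ∧
         (coefA C₀ lam = 0 →
            (∃ k₁ : ℂ, Ψ 0 = k₁ • vecA C₀) ∧ (∃ k₂ : ℂ, Ψ 1 = k₂ • vecB C₀))) ∧
        -- Condition 2 (away from the defect)
        ((coefA M lam ≠ 0 →
            2 < ‖(transfer M lam).trace‖ ∧
            (∀ x : ℤ, 1 ≤ x → (transfer M lam).mulVec (Ψ x) = Ψ (x + 1)) ∧
            (∀ x : ℤ, x < 0 → (transfer M lam).mulVec (Ψ x) = Ψ (x + 1)) ∧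
            (∃ ζ : ℂ,
              ζ ^ 2 - (transfer M lam).trace * ζ + (transfer M lam).det = 0 ∧
              ‖ζ‖ < 1 ∧ (transfer M lam).mulVec (Ψ 1) = ζ • Ψ 1) ∧
            (∃ ζ : ℂ,
              ζ ^ 2 - (transfer M lam).trace * ζ + (transfer M lam).det = 0 ∧
              1 < ‖ζ‖ ∧ (transfer M lam).mulVec (Ψ 0) = ζ • Ψ 0)) ∧
         (coefA M lam = 0 →
            (∃ k₁ : ℂ, Ψ 0 = k₁ • vecB M) ∧ (∃ k₂ : ℂ, Ψ 1 = k₂ • vecA M) ∧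
            (algCond M →
              (∀ x : ℤ, x ≠ 0 → x ≠ 1 → ∃ k : ℂ, Ψ x = k • vecA M) ∧
              {x : ℤ | x ≠ 0 ∧ x ≠ 1 ∧ Ψ x ≠ 0}.Finite) ∧
            (¬ algCond M → ∀ x : ℤ, x ≠ 0 → x ≠ 1 → Ψ x = 0))) := by
  rw [isQWEigenvalue_iff_of_one_defect ha0 hax hne hne0]
  simp only [← scatters_iff_transfer_mulVec_or_vecA_vecB hC₀ hne0 h13' h31']
  by_cases hA : coefA M lam = 0
  · have hunit := star_exp_mul_exp lam
    simp only [scatters_iff_of_eliminate_eq_zero hM hunit hne h13 h31 hA, hA, ne_eq,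
      not_true_eq_false, false_imp_iff, true_imp_iff, true_and,
      algCond_iff_of_eliminate_eq_zero hM hunit hne h13 h31 hA,
      ← finite_support_and_forall_exists_smul_iff]
    exact exists_summable_iff_exists_finite_support (A := fun v => ∃ k : ℂ, v = k • vecA M)
      (B := fun v => ∃ k : ℂ, v = k • vecB M) ⟨0, by simp⟩ ⟨0, by simp⟩
  · simp only [scatters_iff_transfer_mulVec hM hne hA, hA, ne_eq, not_false_eq_true,
      false_imp_iff, true_imp_iff, and_true]
    exact exists_congr fun p => and_congr_right fun hp => and_congr_right fun _ =>
      summable_and_forall_mulVec_iff (norm_det_transfer hM hne hA)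
        (det_mul_conj_trace_transfer hM hne hA) hp
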